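/- For all ε > 0 and δ > 0 there exists a constant C such that if p = p(n) ≥ C n^{-1/2}, then G(n,p) asymptotically almost surely satisfies the following: every Hamiltonian subgraph G' of G(n,p) with more than (1/2 + ε)·n²p/2 edges contains a cycle of length t for all integers t ∈ [δn, (1−δ)n]. -/

import Mathlib

/-!
Fix a Hamiltonian subgraph `G'` without a cycle of length `t = τ + 2`, and place its vertices on
`ZMod n` along a Hamilton cycle. Two crossing chords `{x, y}`, `{x', y'}` whose endpoints satisfy
`x' + y' = x + y + τ` close up, together with two arcs of the Hamilton cycle of total length `τ`,
to a cycle of length `t` (`hasCycleLength_of_crossing`). Hence `G'` contains no such pair.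

Cut the positions into boundedly many blocks of length `m = ⌊κ n⌋`, and put an ordered chord
`(x, y)` into the class given by the block of `y` and the sum `x + y` (`chordClass`). Apart from
`O(m n)` exceptional chords, every chord of a class crosses, in the required way, every chord of
the class obtained by moving `(x, y)` to `(x + τ - m, y + m)` if `y - x` exceeds `τ`, or to
`(x + τ + m, y - m)` if it does not. So no class that meets `G'` is sent to a class that meets
`G'`; as this shift is injective, the classes meeting `G'` cover at most half of all chords, up to
`O(m n)` (`exists_container`). The union of these classes is a container for `G'` with at most
`(1 + ε) n² / 4` edges, and it is determined by the labelling of the vertices and by a set of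
classes, so there are only `n ^ n * 2 ^ O(n)` containers (`exists_container_family`).

By a Chernoff bound, a fixed container holds `(1/2 + ε) n² p / 2` edges of `G(n, p)` with
probability at most `exp (-c p n²)`. Since `p n² ≥ C n ^ (3/2)` dominates `n log n`, the union bound
over all containers finishes the proof, for any `C > 0`
(`tendsto_gnpProb_mediumCycleProp`). In `medium_cycles` the witness is `C = 1`: the hypotheses there
range over all `n`, and for `C > 1` they would be contradictory at `n = 1`, whereas for `C = 1` they
are satisfiable, so that the statement keeps its content.
-/

open Filter Topology Classical

/-- Probability that a graph drawn from the binomial random graph `G(n,p)` (each pair of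
vertices forming an edge independently with probability `p`) satisfies the predicate `P`. -/
noncomputable def gnpProb (V : Type) [Fintype V] [DecidableEq V] (p : ℝ)
    (P : SimpleGraph V → Prop) : ℝ :=
  ∑ G : SimpleGraph V,
    if P G then p ^ G.edgeSet.ncard *
      (1 - p) ^ ((Fintype.card V).choose 2 - G.edgeSet.ncard) else 0

/-- `G` contains a cycle of length `t`. -/
def HasCycleLength {V : Type} (G : SimpleGraph V) (t : ℕ) : Prop :=
  ∃ (v : V) (w : G.Walk v v), w.IsCycle ∧ w.length = t

/-! ### Cycles from crossing chords of a Hamilton cycle -/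

/-- A sequence of consecutively adjacent vertices is a walk; support and edges are recorded so that
the walk can be recognised as a path and closed to a cycle. -/
lemma exists_walk_of_seq {V : Type} {G : SimpleGraph V} (w : ℕ → V) (k : ℕ)
    (hadj : ∀ i < k, G.Adj (w i) (w (i + 1))) :
    ∃ p : G.Walk (w 0) (w k), p.support = (List.range (k + 1)).map w ∧
      p.edges = (List.range k).map (fun i => s(w i, w (i + 1))) := by
  induction k with
  | zero => exact ⟨.nil, by simp, by simp⟩
  | succ k ih =>
    obtain ⟨p, hp, he⟩ := ih (fun i hi => hadj i (by omega))
    refine ⟨p.concat (hadj k (by omega)), ?_, ?_⟩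
    · rw [SimpleGraph.Walk.support_concat, hp, List.range_succ (n := k + 1)]
      simp
    · rw [SimpleGraph.Walk.edges_concat, he, List.range_succ (n := k)]
      simp

/-- The closing edge differs from all edges of the path because `2 ≤ k`. -/
lemma hasCycleLength_of_seq {V : Type} {G : SimpleGraph V} (w : ℕ → V) (k : ℕ) (hk : 2 ≤ k)
    (hinj : ∀ i ≤ k, ∀ j ≤ k, w i = w j → i = j)
    (hadj : ∀ i < k, G.Adj (w i) (w (i + 1))) (hclose : G.Adj (w k) (w 0)) :
    HasCycleLength G (k + 1) := by
  obtain ⟨p, hp, he⟩ := exists_walk_of_seq w k hadj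
  refine ⟨w k, .cons hclose p, ?_, ?_⟩
  · rw [SimpleGraph.Walk.cons_isCycle_iff]
    constructor
    · rw [SimpleGraph.Walk.isPath_def, hp]
      refine List.Nodup.map_on ?_ List.nodup_range
      intro i hi j hj hij
      rw [List.mem_range] at hi hj
      exact hinj i (by omega) j (by omega) hij
    · rw [he]
      intro hmem
      obtain ⟨i, hi, hs⟩ := List.mem_map.1 hmem
      rw [List.mem_range] at hi
      rcases Sym2.eq_iff.1 hs with ⟨h1, -⟩ | ⟨h1, h2⟩
      · have := hinj i (by omega) k le_rfl h1
        omega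
      · have h3 := hinj i (by omega) 0 (by omega) h1
        have h4 := hinj (i + 1) (by omega) k le_rfl h2
        omega
  · have := congrArg List.length hp
    simp only [SimpleGraph.Walk.length_support, List.length_map, List.length_range] at this
    rw [SimpleGraph.Walk.length_cons]
    omega

/-- Crossing chords `{u 0, u b}` and `{u a, u c}` of the path `u 0, …, u (n - 1)` give the cycle
`u 0, …, u a, u c, u (c - 1), …, u b`. -/
lemma hasCycleLength_of_crossing {V : Type} {G : SimpleGraph V} {n : ℕ} (u : ℕ → V)
    (hinj : ∀ i < n, ∀ j < n, u i = u j → i = j)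
    (hadj : ∀ i, G.Adj (u i) (u (i + 1))) {a b c : ℕ} (ha : 0 < a) (hab : a < b) (hbc : b < c)
    (hc : c < n) (h1 : G.Adj (u 0) (u b)) (h2 : G.Adj (u a) (u c)) :
    HasCycleLength G (a + (c - b) + 2) := by
  refine hasCycleLength_of_seq (fun i => if i ≤ a then u i else u (c + a + 1 - i))
    (a + (c - b) + 1) (by omega) ?_ ?_ ?_
  · intro i hi j hj hij
    split_ifs at hij with h3 h4 h4
    · exact hinj _ (by omega) _ (by omega) hij
    · have := hinj _ (by omega) _ (by omega) hij
      omega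
    · have := hinj _ (by omega) _ (by omega) hij
      omega
    · have := hinj _ (by omega) _ (by omega) hij
      omega
  · intro i hi
    split_ifs with h3 h4 h4
    · exact hadj i
    · obtain rfl : i = a := by omega
      have : c + i + 1 - (i + 1) = c := by omega
      rwa [this]
    · omega
    · have := (hadj (c + a + 1 - (i + 1))).symm
      rwa [show c + a + 1 - (i + 1) + 1 = c + a + 1 - i by omega] at this
  · rw [if_neg (by omega), if_pos (by omega), show c + a + 1 - (a + (c - b) + 1) = b by omega]
    exact h1.symm

/-- A Hamilton cycle, as a labelling of the vertices by `ZMod n`. -/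
lemma exists_cyclic_order {n : ℕ} [NeZero n] (hn : 3 ≤ n) {G : SimpleGraph (Fin n)}
    (hG : G.IsHamiltonian) :
    ∃ e : ZMod n ≃ Fin n, ∀ i, G.Adj (e i) (e (i + 1)) := by
  obtain ⟨a, p, hp⟩ := hG (by simp; omega)
  have hlen : p.length = n := by simpa using hp.length_eq
  have hinj : Function.Injective (fun i : ZMod n => p.getVert i.val) := by
    intro i j hij
    have h1 := ZMod.val_lt i
    have h2 := ZMod.val_lt j
    apply ZMod.val_injective n
    exact hp.isCycle.getVert_injOn' (by simp; omega) (by simp; omega) hij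
  have hbij : Function.Bijective (fun i : ZMod n => p.getVert i.val) :=
    (Fintype.bijective_iff_injective_and_card _).2 ⟨hinj, by simp [ZMod.card]⟩
  refine ⟨Equiv.ofBijective _ hbij, fun i => ?_⟩
  simp only [Equiv.ofBijective_apply]
  have h1 := ZMod.val_lt i
  have h3 := p.adj_getVert_succ (i := i.val) (by omega)
  have hv1 : (1 : ZMod n).val = 1 := ZMod.val_one'' (by omega)
  by_cases h : i.val + 1 < n
  · rwa [ZMod.val_add_of_lt (by omega), hv1]
  · have h0 : (i + 1).val = 0 := by
      rw [ZMod.val_add, hv1, show i.val + 1 = n by omega, Nat.mod_self]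
    rw [h0]
    rw [show i.val + 1 = p.length by omega, p.getVert_length] at h3
    simpa using h3

/-! ### Containers for Hamiltonian graphs without a given cycle length -/

section Containers

variable {n : ℕ} [NeZero n]

/-- The class of an ordered chord `(x, y)`: the index of the length-`m` block containing `y` (as a
number in `[0, n)`) and the sum `x + y`. -/
def chordClass (m : ℕ) (q : ZMod n × ZMod n) : ℕ × ZMod n :=
  (q.2.val / m, q.1 + q.2)

/-- Chords `(x, y)` with forward distance `y - x` above `τ`, staying away by a few block lengths from
the degenerate distances `τ`, `n` and from positions `y` where `y ± m` would wrap around. -/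
def GoodPlus (m τ : ℕ) (q : ZMod n × ZMod n) : Prop :=
  (m ≤ q.2.val ∧ q.2.val + m < n) ∧ τ + 2 * m ≤ (q.2 - q.1).val ∧ (q.2 - q.1).val + 4 * m < n

/-- Chords `(x, y)` with forward distance `y - x` below `τ`, staying away by a few block lengths from
the degenerate distances `0`, `τ` and from positions `y` where `y ± m` would wrap around. -/
def GoodMinus (m τ : ℕ) (q : ZMod n × ZMod n) : Prop :=
  (m ≤ q.2.val ∧ q.2.val + m < n) ∧ 4 * m ≤ (q.2 - q.1).val ∧ (q.2 - q.1).val + 2 * m ≤ τ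

/-- Move a chord to one which it crosses and whose sum is larger by `τ`. Only the values at
`GoodPlus` and `GoodMinus` chords matter. -/
noncomputable def chordShift (m τ : ℕ) (q : ZMod n × ZMod n) : ZMod n × ZMod n :=
  if GoodPlus m τ q then (q.1 + (τ : ZMod n) - (m : ZMod n), q.2 + (m : ZMod n)) else (q.1 + (τ : ZMod n) + (m : ZMod n), q.2 - (m : ZMod n))

lemma val_add_of_add_lt {y : ZMod n} {m : ℕ} (h : y.val + m < n) :
    (y + (m : ZMod n)).val = y.val + m := by
  have hm : ((m : ZMod n)).val = m := ZMod.val_cast_of_lt (by omega)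
  rw [ZMod.val_add_of_lt (by omega), hm]

lemma val_sub_of_le_val {y : ZMod n} {m : ℕ} (h : m ≤ y.val) :
    (y - (m : ZMod n)).val = y.val - m := by
  have := ZMod.val_lt y
  have hm : ((m : ZMod n)).val = m := ZMod.val_cast_of_lt (by omega)
  rw [ZMod.val_sub (by omega), hm]

/-- The two branches of the shift cannot collide: a collision forces the forward distances to differ
by exactly `4 m` in the direction that contradicts one lying above and the other below `τ`. -/
lemma chordShift_injOn {m : ℕ} (hm : 0 < m) (τ : ℕ) :
    Set.InjOn (chordShift (n := n) m τ) {q | GoodPlus m τ q ∨ GoodMinus m τ q} := by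
  have key : ∀ q q' : ZMod n × ZMod n, GoodPlus m τ q → GoodMinus m τ q' →
      (q.1 + (τ : ZMod n) - (m : ZMod n), q.2 + (m : ZMod n)) ≠ (q'.1 + (τ : ZMod n) + (m : ZMod n), q'.2 - (m : ZMod n)) := by
    intro q q' hq hq' heq
    obtain ⟨h1, h2⟩ := Prod.ext_iff.1 heq
    simp only at h1 h2
    have h3 : q'.2 - q'.1 = (q.2 - q.1) + ((4 * m : ℕ) : ZMod n) := by
      push_cast
      linear_combination h1 - h2
    have h4 := val_add_of_add_lt hq.2.2
    rw [← h3] at h4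
    have := hq.2.1
    have := hq'.2.2
    omega
  intro q hq q' hq' heq
  unfold chordShift at heq
  split_ifs at heq with h1 h2 h2
  · obtain ⟨h3, h4⟩ := Prod.ext_iff.1 heq
    simp only at h3 h4
    ext1
    · linear_combination h3
    · linear_combination h4
  · exact (key q q' h1 (hq'.resolve_left h2) heq).elim
  · exact (key q' q h2 (hq.resolve_left h1) heq.symm).elim
  · obtain ⟨h3, h4⟩ := Prod.ext_iff.1 heq
    simp only at h3 h4
    ext1
    · linear_combination h3
    · linear_combination h4

lemma hasCycleLength_of_zmod_crossing {G : SimpleGraph (Fin n)} (e : ZMod n ≃ Fin n)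
    (hadj : ∀ i, G.Adj (e i) (e (i + 1))) (x : ZMod n) {a b c : ℕ} (ha : 0 < a) (hab : a < b)
    (hbc : b < c) (hc : c < n) (h1 : G.Adj (e x) (e (x + b)))
    (h2 : G.Adj (e (x + a)) (e (x + c))) :
    HasCycleLength G (a + (c - b) + 2) := by
  refine hasCycleLength_of_crossing (n := n) (fun i : ℕ => e (x + i)) ?_ ?_ ha hab hbc hc
    (by simpa using h1) h2
  · intro i hi j hj hij
    have h3 : (i : ZMod n) = j := by simpa using hij
    have h4 := congrArg ZMod.val h3
    rwa [ZMod.val_cast_of_lt hi, ZMod.val_cast_of_lt hj] at h4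
  · intro i
    have := hadj (x + i)
    push_cast
    rwa [← add_assoc]

/-- If the class of a `GoodPlus` chord `q` and the class of its shift both contain edges of `G`, then
these edges cross as required. The edges themselves need not be `q` or its shift: inside a class
the forward distance varies by less than `2 m`, which the margins in `GoodPlus` absorb. -/
lemma hasCycleLength_of_goodPlus {G : SimpleGraph (Fin n)} (e : ZMod n ≃ Fin n)
    (hadj : ∀ i, G.Adj (e i) (e (i + 1))) {m τ : ℕ} (hm : 0 < m) (hτ : 2 * m ≤ τ)
    {q q₀ q₁ : ZMod n × ZMod n} (hq : GoodPlus m τ q)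
    (h0 : chordClass m q₀ = chordClass m q)
    (h1 : chordClass m q₁ = chordClass m (q.1 + (τ : ZMod n) - (m : ZMod n), q.2 + (m : ZMod n)))
    (ha0 : G.Adj (e q₀.1) (e q₀.2)) (ha1 : G.Adj (e q₁.1) (e q₁.2)) :
    HasCycleLength G (τ + 2) := by
  obtain ⟨x, y⟩ := q
  obtain ⟨x₀, y₀⟩ := q₀
  obtain ⟨x₁, y₁⟩ := q₁
  obtain ⟨⟨hy1, hy2⟩, hl1, hl2⟩ := hq
  simp only [chordClass, Prod.mk.injEq] at *
  obtain ⟨hb0, hs0⟩ := h0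
  obtain ⟨hb1, hs1⟩ := h1
  rw [val_add_of_add_lt hy2, Nat.add_div_right _ hm] at hb1
  have hdx := Nat.div_add_mod y.val m
  have hdx0 := Nat.div_add_mod y₀.val m
  have hdx1 := Nat.div_add_mod y₁.val m
  have hm0 := Nat.mod_lt y.val hm
  have hm1 := Nat.mod_lt y₀.val hm
  have hm2 := Nat.mod_lt y₁.val hm
  rw [hb0] at hdx0
  rw [hb1, Nat.mul_succ] at hdx1
  -- `β` is the displacement of the second endpoint, `l` a representative of `y₀ - x₀`.
  obtain ⟨β, hβ⟩ : ∃ β, y₁.val = y₀.val + β := ⟨y₁.val - y₀.val, by omega⟩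
  obtain ⟨l, hl⟩ : ∃ l, l + 2 * y.val = (y - x).val + 2 * y₀.val :=
    ⟨(y - x).val + 2 * y₀.val - 2 * y.val, by omega⟩
  have hβ' : y₁ = y₀ + β := by
    have := congrArg (Nat.cast : ℕ → ZMod n) hβ
    simpa using this
  have hl' : (l : ZMod n) + 2 * y = (y - x) + 2 * y₀ := by
    have := congrArg (Nat.cast : ℕ → ZMod n) hl
    push_cast at this
    simpa using this
  have hτβ : ((τ - β : ℕ) : ZMod n) = τ - β := Nat.cast_sub (by omega)
  have := hasCycleLength_of_zmod_crossing e hadj x₀ (a := τ - β) (b := l) (c := l + β)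
    (by omega) (by omega) (by omega) (by omega)
    (by rwa [show x₀ + (l : ZMod n) = y₀ by linear_combination hl' + hs0])
    (by
      rw [hτβ, show x₀ + ((τ : ZMod n) - β) = x₁ by linear_combination hs0 - hs1 + hβ']
      rwa [show x₀ + ((l + β : ℕ) : ZMod n) = y₁ by
        push_cast; linear_combination hl' + hs0 - hβ'])
  rwa [show τ - β + (l + β - l) + 2 = τ + 2 by omega] at this

/-- The analogue of `hasCycleLength_of_goodPlus` for `GoodMinus` chords. -/
lemma hasCycleLength_of_goodMinus {G : SimpleGraph (Fin n)} (e : ZMod n ≃ Fin n)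
    (hadj : ∀ i, G.Adj (e i) (e (i + 1))) {m τ : ℕ} (hm : 0 < m) (hτ : τ + 2 * m ≤ n)
    {q q₀ q₁ : ZMod n × ZMod n} (hq : GoodMinus m τ q)
    (h0 : chordClass m q₀ = chordClass m q)
    (h1 : chordClass m q₁ = chordClass m (q.1 + (τ : ZMod n) + (m : ZMod n), q.2 - (m : ZMod n)))
    (ha0 : G.Adj (e q₀.1) (e q₀.2)) (ha1 : G.Adj (e q₁.1) (e q₁.2)) :
    HasCycleLength G (τ + 2) := by
  obtain ⟨x, y⟩ := q
  obtain ⟨x₀, y₀⟩ := q₀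
  obtain ⟨x₁, y₁⟩ := q₁
  obtain ⟨⟨hy1, hy2⟩, hl1, hl2⟩ := hq
  simp only [chordClass, Prod.mk.injEq] at *
  obtain ⟨hb0, hs0⟩ := h0
  obtain ⟨hb1, hs1⟩ := h1
  rw [val_sub_of_le_val hy1] at hb1
  have hb1' : y₁.val / m + 1 = y.val / m := by
    rw [hb1, ← Nat.add_div_right _ hm, Nat.sub_add_cancel hy1]
  have hdx := Nat.div_add_mod y.val m
  have hdx0 := Nat.div_add_mod y₀.val m
  have hdx1 := Nat.div_add_mod y₁.val m
  have hm0 := Nat.mod_lt y.val hm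
  have hm1 := Nat.mod_lt y₀.val hm
  have hm2 := Nat.mod_lt y₁.val hm
  rw [hb0, ← hb1', Nat.mul_succ] at hdx0
  rw [← hb1', Nat.mul_succ] at hdx
  -- `β` is the backward displacement of the second endpoint, `l` a representative of `y₀ - x₀`.
  obtain ⟨β, hβ⟩ : ∃ β, y₁.val + β = y₀.val := ⟨y₀.val - y₁.val, by omega⟩
  obtain ⟨l, hl⟩ : ∃ l, l + 2 * y.val = (y - x).val + 2 * y₀.val :=
    ⟨(y - x).val + 2 * y₀.val - 2 * y.val, by omega⟩
  have hβ' : y₁ + β = y₀ := by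
    have := congrArg (Nat.cast : ℕ → ZMod n) hβ
    simpa using this
  have hl' : (l : ZMod n) + 2 * y = (y - x) + 2 * y₀ := by
    have := congrArg (Nat.cast : ℕ → ZMod n) hl
    push_cast at this
    simpa using this
  have hlβ : ((l - β : ℕ) : ZMod n) = l - β := Nat.cast_sub (by omega)
  have := hasCycleLength_of_zmod_crossing e hadj x₀ (a := l - β) (b := l) (c := τ + β)
    (by omega) (by omega) (by omega) (by omega)
    (by rwa [show x₀ + (l : ZMod n) = y₀ by linear_combination hl' + hs0])
    (by
      rw [hlβ, show x₀ + ((l : ZMod n) - β) = y₁ by linear_combination hl' + hs0 - hβ']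
      rw [show x₀ + ((τ + β : ℕ) : ZMod n) = x₁ by
        push_cast; linear_combination hs0 - hs1 + hβ']
      exact ha1.symm)
  rwa [show l - β + (τ + β - l) + 2 = τ + 2 by omega] at this

/-- At most `2 m` positions `y` and `12 m` forward distances `y - x` are excluded. -/
lemma card_not_good (m τ : ℕ) :
    (Finset.univ.filter fun q : ZMod n × ZMod n => ¬(GoodPlus m τ q ∨ GoodMinus m τ q)).card
      ≤ 14 * m * n := by
  have hval : ∀ s : Finset ℕ, (Finset.univ.filter fun y : ZMod n => y.val ∈ s).card ≤ s.card := by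
    intro s
    refine Finset.card_le_card_of_injOn ZMod.val (by intro y hy; simpa using hy) ?_
    exact (ZMod.val_injective n).injOn
  set Y := Finset.univ.filter fun y : ZMod n =>
    y.val ∈ Finset.range m ∪ Finset.Ico (n - m) n with hY
  set L := Finset.univ.filter fun y : ZMod n =>
    y.val ∈ Finset.range (4 * m) ∪ Finset.Ico (τ + 1 - 2 * m) (τ + 2 * m) ∪
      Finset.Ico (n - 4 * m) n with hL
  have hYc : Y.card ≤ 2 * m := by
    refine (hval _).trans ((Finset.card_union_le _ _).trans ?_)
    simp only [Finset.card_range, Nat.card_Ico]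
    omega
  have hLc : L.card ≤ 12 * m := by
    refine (hval _).trans ((Finset.card_union_le _ _).trans ?_)
    have := Finset.card_union_le (Finset.range (4 * m))
      (Finset.Ico (τ + 1 - 2 * m) (τ + 2 * m))
    simp only [Finset.card_range, Nat.card_Ico] at *
    omega
  have hsub : (Finset.univ.filter fun q : ZMod n × ZMod n =>
      ¬(GoodPlus m τ q ∨ GoodMinus m τ q)) ⊆
      (Finset.univ ×ˢ Y) ∪
        (L ×ˢ Finset.univ).image (fun r : ZMod n × ZMod n => (r.2, r.1 + r.2)) := by
    rintro ⟨x, y⟩ hq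
    replace hq := (Finset.mem_filter.1 hq).2
    simp only [GoodPlus, GoodMinus] at hq
    have h1 := ZMod.val_lt y
    have h2 := ZMod.val_lt (y - x)
    rw [Finset.mem_union]
    by_cases hy : y ∈ Y
    · left; simpa using hy
    · right
      rw [Finset.mem_image]
      refine ⟨(y - x, x), ?_, by simp⟩
      simp only [hY, hL, Finset.mem_filter, Finset.mem_univ, true_and, Finset.mem_union,
        Finset.mem_range, Finset.mem_Ico, Finset.mem_product, and_true] at *
      omega
  calc _ ≤ _ := Finset.card_le_card hsub
    _ ≤ n * Y.card + L.card * n := by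
      refine (Finset.card_union_le _ _).trans (add_le_add ?_ (Finset.card_image_le.trans ?_))
      · rw [Finset.card_product]; simp [ZMod.card]
      · rw [Finset.card_product]; simp [ZMod.card]
    _ ≤ n * (2 * m) + 12 * m * n := by gcongr
    _ = 14 * m * n := by ring

/-- All pairs of vertices for which both ordered chords have their class in `A`, where `pos` gives the
positions of the vertices. -/
def containerGraph (m : ℕ) (pos : Fin n → ZMod n) (A : Set (ℕ × ZMod n)) :
    SimpleGraph (Fin n) where
  Adj a b := a ≠ b ∧ chordClass m (pos a, pos b) ∈ A ∧ chordClass m (pos b, pos a) ∈ A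
  symm := ⟨fun _ _ h => ⟨h.1.symm, h.2.2, h.2.1⟩⟩
  loopless := ⟨fun _ h => h.1 rfl⟩

/-- A Hamiltonian graph without a cycle of length `τ + 2` lies in a container graph with at most
about `n² / 4` edges. -/
lemma exists_container {m τ : ℕ} (hn : 3 ≤ n) (hm : 0 < m) (hτ1 : 2 * m ≤ τ)
    (hτ2 : τ + 2 * m ≤ n) {G : SimpleGraph (Fin n)} (hG : G.IsHamiltonian)
    (hcyc : ¬ HasCycleLength G (τ + 2)) :
    ∃ (pos : Fin n → ZMod n) (A : Set (ℕ × ZMod n)),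
      (∀ c ∈ A, c.1 < n / m + 1) ∧ G ≤ containerGraph m pos A ∧
      4 * (containerGraph m pos A).edgeSet.ncard ≤ n ^ 2 + 28 * m * n := by
  obtain ⟨e, hadj⟩ := exists_cyclic_order hn hG
  set A : Set (ℕ × ZMod n) := chordClass m '' {q | G.Adj (e q.1) (e q.2)} with hA
  refine ⟨e.symm, A, ?_, ?_, ?_⟩
  · rintro _ ⟨q, -, rfl⟩
    exact Nat.lt_succ_of_le (Nat.div_le_div_right (ZMod.val_lt _).le)
  · intro a b hab
    exact ⟨hab.ne, ⟨_, by simpa using hab, rfl⟩, ⟨_, by simpa using hab.symm, rfl⟩⟩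
  · set H := containerGraph m e.symm A with hH
    set U := Finset.univ.filter fun q : ZMod n × ZMod n => chordClass m q ∈ A with hU
    set B := Finset.univ.filter fun q : ZMod n × ZMod n =>
      ¬(GoodPlus m τ q ∨ GoodMinus m τ q) with hB
    have h1 : 2 * H.edgeSet.ncard ≤ U.card := by
      rw [← SimpleGraph.coe_edgeFinset, Set.ncard_coe_finset, SimpleGraph.two_mul_card_edgeFinset]
      refine Finset.card_le_card_of_injOn (fun r => (e.symm r.1, e.symm r.2)) ?_ ?_
      · rintro ⟨a, b⟩ hab
        have hab' : H.Adj a b := by simpa using hab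
        simpa [hU] using hab'.2.1
      · rintro ⟨a, b⟩ - ⟨c, d⟩ - h
        simpa using h
    have h2 : ∀ q ∈ U \ B, chordShift m τ q ∉ U := by
      intro q hq hq'
      simp only [hU, hB, Finset.mem_sdiff, Finset.mem_filter, Finset.mem_univ, true_and,
        not_not] at hq hq'
      obtain ⟨⟨q₀, ha0, h0⟩, hgood⟩ := hq
      obtain ⟨q₁, ha1, h1⟩ := hq'
      unfold chordShift at h1
      split_ifs at h1 with hp
      · exact hcyc (hasCycleLength_of_goodPlus e hadj hm hτ1 hp h0 h1 ha0 ha1)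
      · exact hcyc (hasCycleLength_of_goodMinus e hadj hm hτ2 (hgood.resolve_left hp)
          h0 h1 ha0 ha1)
    have h3 : (U \ B).card + U.card ≤ n ^ 2 := by
      have hinj : Set.InjOn (chordShift (n := n) m τ) (U \ B : Finset _) := by
        refine (chordShift_injOn hm τ).mono ?_
        intro q hq
        simp only [hB, Finset.coe_sdiff, Set.mem_sdiff, Finset.mem_coe, Finset.mem_filter,
          Finset.mem_univ, true_and, not_not] at hq
        exact hq.2
      rw [← Finset.card_image_of_injOn hinj, ← Finset.card_union_of_disjoint]
      · refine (Finset.card_le_univ _).trans ?_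
        simp [ZMod.card, sq]
      · rw [Finset.disjoint_left]
        intro r hr
        obtain ⟨q, hq, rfl⟩ := Finset.mem_image.1 hr
        exact h2 q hq
    have h4 : B.card ≤ 14 * m * n := card_not_good m τ
    have h5 : U.card ≤ (U \ B).card + B.card := by
      have := Finset.le_card_sdiff B U
      omega
    have h6 : 28 * m * n = 2 * (14 * m * n) := by ring
    omega

end Containers

/-! ### Upper tails in the binomial random graph -/

section Probability

variable {V : Type} [Fintype V] [DecidableEq V]

/-- The probability of the single graph `G` under `G(n, p)`. -/
noncomputable def gnpWeight (p : ℝ) (G : SimpleGraph V) : ℝ :=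
  p ^ G.edgeSet.ncard * (1 - p) ^ ((Fintype.card V).choose 2 - G.edgeSet.ncard)

lemma gnpWeight_nonneg {p : ℝ} (hp0 : 0 ≤ p) (hp1 : p ≤ 1) (G : SimpleGraph V) :
    0 ≤ gnpWeight p G :=
  mul_nonneg (pow_nonneg hp0 _) (pow_nonneg (by linarith) _)

/-- The probability generating function of the number of edges that `G(n, p)` has inside `H`. -/
lemma sum_gnpWeight_mul_pow (p z : ℝ) (H : SimpleGraph V) :
    ∑ G : SimpleGraph V, gnpWeight p G * z ^ (G ⊓ H).edgeSet.ncard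
      = (p * z + (1 - p)) ^ H.edgeSet.ncard := by
  set E := (⊤ : SimpleGraph V).edgeFinset with hE
  have hEc : E.card = (Fintype.card V).choose 2 :=
    SimpleGraph.card_edgeFinset_top_eq_card_choose_two
  have hHE : H.edgeFinset ⊆ E := SimpleGraph.edgeFinset_mono le_top
  have hprod : ∏ e ∈ E, (p * (if e ∈ H.edgeFinset then z else 1) + (1 - p))
      = (p * z + (1 - p)) ^ H.edgeSet.ncard := by
    rw [← SimpleGraph.coe_edgeFinset, Set.ncard_coe_finset, ← Finset.prod_const,
      ← Finset.prod_subset hHE]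
    · exact Finset.prod_congr rfl fun e he => by rw [if_pos he]
    · intro e _ he
      rw [if_neg he]
      ring
  rw [← hprod, Finset.prod_add]
  refine Finset.sum_bij' (fun G _ => G.edgeFinset)
    (fun S _ => SimpleGraph.fromEdgeSet (S : Set (Sym2 V))) ?_ ?_ ?_ ?_ ?_
  · intro G _
    exact Finset.mem_powerset.2 (SimpleGraph.edgeFinset_mono le_top)
  · intro S _
    exact Finset.mem_univ _
  · intro G _
    simp
  · intro S hS
    ext e
    have := Finset.mem_powerset.1 hS
    simp only [SimpleGraph.mem_edgeFinset, SimpleGraph.edgeSet_fromEdgeSet, Set.mem_sdiff,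
      Finset.mem_coe, and_iff_left_iff_imp]
    intro he
    have h1 := this he
    rw [hE, SimpleGraph.mem_edgeFinset] at h1
    simpa using SimpleGraph.not_isDiag_of_mem_edgeSet _ h1
  · intro G _
    have hGE : G.edgeFinset ⊆ E := SimpleGraph.edgeFinset_mono le_top
    have hinf : (G ⊓ H).edgeSet.ncard = (G.edgeFinset.filter (· ∈ H.edgeFinset)).card := by
      rw [← Set.ncard_coe_finset]
      congr 1
      ext e
      simp
    rw [Finset.prod_mul_distrib, Finset.prod_const, Finset.prod_const, Finset.prod_ite,
      Finset.prod_const, Finset.prod_const_one, mul_one, Finset.card_sdiff_of_subset hGE, hEc,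
      hinf, gnpWeight, ← SimpleGraph.coe_edgeFinset, Set.ncard_coe_finset]
    ring

lemma gnpProb_add_gnpProb_not (p : ℝ) (P : SimpleGraph V → Prop) :
    gnpProb V p P + gnpProb V p (fun G => ¬ P G) = 1 := by
  have h := sum_gnpWeight_mul_pow (V := V) p 1 ⊥
  simp only [one_pow, mul_one, add_sub_cancel] at h
  rw [← h, gnpProb, gnpProb, ← Finset.sum_add_distrib]
  refine Finset.sum_congr rfl fun G _ => ?_
  by_cases hP : P G <;> simp [hP, gnpWeight]

lemma gnpProb_nonneg {p : ℝ} (hp0 : 0 ≤ p) (hp1 : p ≤ 1) (P : SimpleGraph V → Prop) :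
    0 ≤ gnpProb V p P := by
  refine Finset.sum_nonneg fun G _ => ?_
  split_ifs
  · exact gnpWeight_nonneg hp0 hp1 G
  · exact le_rfl

/-- Union bound over the family `F` with the exponential Markov inequality at parameter `lam` for
each member. -/
lemma gnpProb_le_of_containers {p : ℝ} (hp0 : 0 ≤ p) (hp1 : p ≤ 1) {lam : ℝ} (hlam : 0 ≤ lam)
    {T M : ℝ} (F : Finset (SimpleGraph V)) (hF : ∀ H ∈ F, (H.edgeSet.ncard : ℝ) ≤ M)
    (P : SimpleGraph V → Prop)
    (hP : ∀ G, P G → ∃ H ∈ F, T ≤ ((G ⊓ H).edgeSet.ncard : ℝ)) :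
    gnpProb V p P ≤ F.card * Real.exp (p * (Real.exp lam - 1) * M - lam * T) := by
  have hz : 0 ≤ Real.exp lam - 1 := by
    have := Real.add_one_le_exp lam
    linarith
  calc gnpProb V p P
      ≤ ∑ G : SimpleGraph V, ∑ H ∈ F, gnpWeight p G *
          Real.exp (lam * ((G ⊓ H).edgeSet.ncard - T)) := by
        refine Finset.sum_le_sum fun G _ => ?_
        have hnn : ∀ H ∈ F, 0 ≤ gnpWeight p G *
            Real.exp (lam * ((G ⊓ H).edgeSet.ncard - T)) := fun H _ =>
          mul_nonneg (gnpWeight_nonneg hp0 hp1 G) (Real.exp_pos _).le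
        split_ifs with h
        · obtain ⟨H, hH, hT⟩ := hP G h
          refine le_trans ?_ (Finset.single_le_sum hnn hH)
          refine le_mul_of_one_le_right (gnpWeight_nonneg hp0 hp1 G) ?_
          exact Real.one_le_exp (mul_nonneg hlam (by linarith))
        · exact Finset.sum_nonneg hnn
    _ = ∑ H ∈ F, Real.exp (-(lam * T)) *
          (p * Real.exp lam + (1 - p)) ^ H.edgeSet.ncard := by
        rw [Finset.sum_comm]
        refine Finset.sum_congr rfl fun H _ => ?_
        rw [← sum_gnpWeight_mul_pow, Finset.mul_sum]
        refine Finset.sum_congr rfl fun G _ => ?_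
        rw [← Real.exp_nat_mul, show lam * (((G ⊓ H).edgeSet.ncard : ℝ) - T)
          = -(lam * T) + (G ⊓ H).edgeSet.ncard * lam by ring, Real.exp_add]
        ring
    _ ≤ ∑ H ∈ F, Real.exp (p * (Real.exp lam - 1) * M - lam * T) := by
        refine Finset.sum_le_sum fun H hH => ?_
        have h1 : p * Real.exp lam + (1 - p) ≤ Real.exp (p * (Real.exp lam - 1)) := by
          have := Real.add_one_le_exp (p * (Real.exp lam - 1))
          linarith
        have h0 : 0 ≤ p * Real.exp lam + (1 - p) :=
          add_nonneg (mul_nonneg hp0 (Real.exp_pos _).le) (by linarith)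
        rw [show p * (Real.exp lam - 1) * M - lam * T
          = -(lam * T) + p * (Real.exp lam - 1) * M by ring, Real.exp_add]
        gcongr
        calc _ ≤ Real.exp (p * (Real.exp lam - 1)) ^ H.edgeSet.ncard := by gcongr
          _ = Real.exp (H.edgeSet.ncard * (p * (Real.exp lam - 1))) := by rw [Real.exp_nat_mul]
          _ ≤ _ := by
            rw [Real.exp_le_exp, mul_comm]
            exact mul_le_mul_of_nonneg_left (hF H hH) (mul_nonneg hp0 hz)
    _ = _ := by rw [Finset.sum_const, nsmul_eq_mul]

end Probability

/-! ### Union bound over the containers -/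

/-- The containers come from a family, independent of `τ`, of size `exp (O(n log n))` when `n / m` is
bounded. -/
lemma exists_container_family {n m : ℕ} (hn : 3 ≤ n) (hm : 0 < m) :
    ∃ F : Finset (SimpleGraph (Fin n)), F.card ≤ n ^ n * 2 ^ ((n / m + 1) * n) ∧
      (∀ H ∈ F, 4 * H.edgeSet.ncard ≤ n ^ 2 + 28 * m * n) ∧
      ∀ (τ : ℕ) (G : SimpleGraph (Fin n)), 2 * m ≤ τ → τ + 2 * m ≤ n → G.IsHamiltonian →
        ¬ HasCycleLength G (τ + 2) → ∃ H ∈ F, G ≤ H := by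
  have : NeZero n := ⟨by omega⟩
  set f : (Fin n → ZMod n) × Finset (Fin (n / m + 1) × ZMod n) → SimpleGraph (Fin n) :=
    fun d => containerGraph m d.1 {c | ∃ k ∈ d.2, (k.1.val, k.2) = c} with hf
  refine ⟨(Finset.univ.image f).filter fun H => 4 * H.edgeSet.ncard ≤ n ^ 2 + 28 * m * n,
    ?_, fun H hH => (Finset.mem_filter.1 hH).2, ?_⟩
  · refine (Finset.card_filter_le _ _).trans (Finset.card_image_le.trans ?_)
    simp [ZMod.card]
  · intro τ G h1 h2 hG hcyc
    obtain ⟨pos, A, hA, hle, hcard⟩ := exists_container hn hm h1 h2 hG hcyc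
    have hfA : f (pos, Finset.univ.filter fun k => (k.1.val, k.2) ∈ A) =
        containerGraph m pos A := by
      have : {c | ∃ k ∈ (Finset.univ.filter fun k : Fin (n / m + 1) × ZMod n =>
          (k.1.val, k.2) ∈ A), (k.1.val, k.2) = c} = A := by
        ext ⟨i, z⟩
        constructor
        · rintro ⟨k, hk, hkc⟩
          rw [← hkc]
          simpa using hk
        · intro h
          exact ⟨(⟨i, hA _ h⟩, z), by simpa using h, rfl⟩
      simp only [hf, this]
    refine ⟨containerGraph m pos A, Finset.mem_filter.2 ⟨?_, hcard⟩, hle⟩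
    exact Finset.mem_image.2 ⟨_, Finset.mem_univ _, hfA⟩

/-- The property of `G` in `medium_cycles`, with `p` the edge probability of the model. -/
def MediumCycleProp (ε δ : ℝ) (n : ℕ) (p : ℝ) (G : SimpleGraph (Fin n)) : Prop :=
  ∀ G' : SimpleGraph (Fin n), G' ≤ G → G'.IsHamiltonian →
    (1/2 + ε) * ((n : ℝ)^2 * p / 2) < (G'.edgeSet.ncard : ℝ) →
    ∀ t : ℕ, δ * n ≤ (t : ℝ) → (t : ℝ) ≤ (1 - δ) * n → HasCycleLength G' t

/-- The term `n log n + K n` counts the containers; `c p n²` comes from the Chernoff bound. -/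
lemma gnpProb_not_mediumCycleProp_le {ε δ : ℝ} (hε : 0 < ε) (hδ : 0 < δ) :
    ∃ c : ℝ, 0 < c ∧ ∃ K : ℕ, ∀ᶠ n : ℕ in atTop, ∀ p : ℝ, 0 ≤ p → p ≤ 1 →
      gnpProb (Fin n) p (fun G => ¬ MediumCycleProp ε δ n p G) ≤
        Real.exp (n * Real.log n + K * n - c * (p * (n : ℝ) ^ 2)) := by
  set κ : ℝ := min (ε / 28) (δ / 4) with hκ
  have hκ0 : 0 < κ := lt_min (by positivity) (by positivity)
  have hκ1 : 28 * κ ≤ ε := by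
    have := min_le_left (ε / 28) (δ / 4)
    linarith
  have hκ2 : 4 * κ ≤ δ := by
    have := min_le_right (ε / 28) (δ / 4)
    linarith
  -- Chosen so that `(lam + lam ^ 2) * (1 + ε)` is smaller than `lam * (1 + 2 * ε)`.
  set lam : ℝ := ε / (2 * (1 + ε)) with hlam
  have hlam0 : 0 < lam := by positivity
  have hlam1 : lam * (1 + ε) = ε / 2 := by rw [hlam]; field_simp
  have hlam2 : lam ≤ 1 := by rw [hlam, div_le_one (by positivity)]; linarith
  refine ⟨lam * ε / 8, by positivity, ⌈2 / κ⌉₊ + 1, ?_⟩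
  filter_upwards [eventually_ge_atTop 3,
    tendsto_natCast_atTop_atTop.eventually_ge_atTop (2 / κ),
    tendsto_natCast_atTop_atTop.eventually_ge_atTop (4 / δ)] with n hn3 hnκ hnδ p hp0 hp1
  rw [div_le_iff₀ hκ0] at hnκ
  rw [div_le_iff₀ hδ] at hnδ
  have hn0 : (0 : ℝ) < n := by
    have : 0 < n := by omega
    exact_mod_cast this
  set m : ℕ := ⌊κ * n⌋₊ with hm
  have hm1 : (m : ℝ) ≤ κ * n := Nat.floor_le (by positivity)
  have hm2 : κ * n < m + 1 := Nat.lt_floor_add_one _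
  have hm3 : κ * n / 2 ≤ m := by linarith
  have hm0 : 0 < m := by
    have : (0 : ℝ) < m := by linarith
    exact_mod_cast this
  obtain ⟨F, hFc, hFe, hF⟩ := exists_container_family hn3 hm0
  have hblocks : n / m + 1 ≤ ⌈2 / κ⌉₊ + 1 := by
    have h1 : ((n / m : ℕ) : ℝ) ≤ 2 / κ := by
      refine Nat.cast_div_le.trans ?_
      rw [div_le_div_iff₀ (by exact_mod_cast hm0) hκ0]
      linarith
    have h2 : ((n / m : ℕ) : ℝ) ≤ (⌈2 / κ⌉₊ : ℝ) := h1.trans (Nat.le_ceil _)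
    have h3 : n / m ≤ ⌈2 / κ⌉₊ := by exact_mod_cast h2
    omega
  set K : ℕ := ⌈2 / κ⌉₊ + 1 with hK
  have hFcard : (F.card : ℝ) ≤ Real.exp (n * Real.log n + K * n) := by
    have h1 : F.card ≤ n ^ n * 2 ^ (K * n) :=
      hFc.trans (Nat.mul_le_mul_left _ (Nat.pow_le_pow_right (by norm_num)
        (Nat.mul_le_mul_right _ hblocks)))
    have h2 : (F.card : ℝ) ≤ (n : ℝ) ^ n * 2 ^ (K * n) := by exact_mod_cast h1
    refine h2.trans ?_
    rw [Real.exp_add, Real.exp_nat_mul, Real.exp_log hn0]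
    gcongr
    have h3 : (2 : ℝ) ≤ Real.exp 1 := by
      have := Real.add_one_le_exp (1 : ℝ)
      linarith
    calc (2 : ℝ) ^ (K * n) ≤ Real.exp 1 ^ (K * n) := by gcongr
      _ = Real.exp (K * n) := by rw [← Real.exp_nat_mul]; push_cast; ring_nf
  have hFM : ∀ H ∈ F, (H.edgeSet.ncard : ℝ) ≤ (1 + ε) * (n : ℝ) ^ 2 / 4 := by
    intro H hH
    have h1 : 4 * (H.edgeSet.ncard : ℝ) ≤ (n : ℝ) ^ 2 + 28 * m * n := by
      exact_mod_cast hFe H hH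
    have h2 : 28 * (m : ℝ) ≤ ε * n := by nlinarith
    nlinarith
  have hprob := gnpProb_le_of_containers (V := Fin n) hp0 hp1 hlam0.le
    (T := (1/2 + ε) * ((n : ℝ)^2 * p / 2)) F hFM (fun G => ¬ MediumCycleProp ε δ n p G) (by
      intro G hG
      simp only [MediumCycleProp, not_forall] at hG
      obtain ⟨G', hle, hham, hedge, t, ht1, ht2, hcyc⟩ := hG
      have h1 : 2 * m + 2 ≤ t := by
        have : (2 * m + 2 : ℝ) ≤ t := by nlinarith
        exact_mod_cast this
      have h2 : t + 2 * m ≤ n := by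
        have : (t + 2 * m : ℝ) ≤ n := by nlinarith
        exact_mod_cast this
      obtain ⟨H, hHF, hGH⟩ := hF (t - 2) G' (by omega) (by omega) hham
        (by rwa [show t - 2 + 2 = t by omega])
      refine ⟨H, hHF, hedge.le.trans ?_⟩
      have h3 : G'.edgeSet.ncard ≤ (G ⊓ H).edgeSet.ncard :=
        Set.ncard_le_ncard (SimpleGraph.edgeSet_mono (le_inf hle hGH)) (Set.toFinite _)
      exact_mod_cast h3)
  refine hprob.trans ?_
  rw [sub_eq_add_neg (_ + _), Real.exp_add (n * Real.log n + K * n)]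
  refine mul_le_mul hFcard (Real.exp_le_exp.2 ?_) (Real.exp_pos _).le (Real.exp_pos _).le
  have hexp : Real.exp lam - 1 ≤ lam + lam ^ 2 := by
    have := Real.abs_exp_sub_one_sub_id_le (x := lam) (by rw [abs_of_pos hlam0]; exact hlam2)
    have := (abs_le.1 this).2
    linarith
  have hX : 0 ≤ p * (n : ℝ) ^ 2 := by positivity
  calc p * (Real.exp lam - 1) * ((1 + ε) * (n : ℝ) ^ 2 / 4)
        - lam * ((1/2 + ε) * ((n : ℝ)^2 * p / 2))
      = p * (n : ℝ) ^ 2 / 4 * ((Real.exp lam - 1) * (1 + ε) - lam * (1 + 2 * ε)) := by ring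
    _ ≤ p * (n : ℝ) ^ 2 / 4 * ((lam + lam ^ 2) * (1 + ε) - lam * (1 + 2 * ε)) := by gcongr
    _ = p * (n : ℝ) ^ 2 / 4 * (lam * (lam * (1 + ε) - ε)) := by ring
    _ = -(lam * ε / 8 * (p * (n : ℝ) ^ 2)) := by rw [hlam1]; ring

lemma tendsto_error_bound (K : ℕ) {c : ℝ} (hc : 0 < c) :
    Tendsto (fun n : ℕ => Real.exp (n * Real.log n + K * n - c * (n : ℝ) ^ (3/2 : ℝ)))
      atTop (𝓝 0) := by
  have hreal : Tendsto (fun x : ℝ => Real.exp (x * Real.log x + K * x - c * x ^ (3/2 : ℝ)))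
      atTop (𝓝 0) := by
    have hlim : Tendsto (fun x : ℝ => Real.exp (-x)) atTop (𝓝 0) :=
      Real.tendsto_exp_neg_atTop_nhds_zero
    refine squeeze_zero' (Eventually.of_forall fun x => (Real.exp_pos _).le) ?_ hlim
    have hlog := (isLittleO_log_rpow_atTop (show (0 : ℝ) < 1/2 by norm_num)).bound
      (show 0 < c / 2 by positivity)
    have hpow := (tendsto_rpow_atTop (show (0 : ℝ) < 1/2 by norm_num)).eventually_ge_atTop
      ((K + 1) / (c / 2))
    filter_upwards [hlog, hpow, eventually_ge_atTop 1] with x h1 h2 h3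
    have hx0 : 0 < x := by linarith
    have h4 : Real.log x ≤ c / 2 * x ^ (1/2 : ℝ) := by
      have h5 := (Real.le_norm_self _).trans h1
      rwa [Real.norm_of_nonneg (by positivity)] at h5
    rw [div_le_iff₀ (by positivity)] at h2
    have h6 : x ^ (3/2 : ℝ) = x * x ^ (1/2 : ℝ) := by
      rw [← Real.rpow_one_add' hx0.le (by norm_num)]
      norm_num
    rw [Real.exp_le_exp, h6]
    nlinarith
  exact hreal.comp tendsto_natCast_atTop_atTop

/-- The result for every `C > 0`, with the bounds on `p` required only for large `n`. -/
theorem tendsto_gnpProb_mediumCycleProp {ε δ C : ℝ} (hε : 0 < ε) (hδ : 0 < δ) (hC : 0 < C)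
    {p : ℕ → ℝ} (hp0 : ∀ᶠ n : ℕ in atTop, C * (n : ℝ) ^ (-(1/2) : ℝ) ≤ p n)
    (hp1 : ∀ᶠ n in atTop, p n ≤ 1) :
    Tendsto (fun n : ℕ => gnpProb (Fin n) (p n) (MediumCycleProp ε δ n (p n))) atTop (𝓝 1) := by
  obtain ⟨c, hc, K, hbound⟩ := gnpProb_not_mediumCycleProp_le hε hδ
  have hlim := (tendsto_error_bound K (mul_pos hc hC)).const_sub 1
  rw [sub_zero] at hlim
  refine tendsto_of_tendsto_of_tendsto_of_le_of_le' hlim tendsto_const_nhds ?_ ?_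
  · filter_upwards [hbound, hp0, hp1, eventually_ge_atTop 1] with n hb h0 h1 hn
    have hn0 : (0 : ℝ) < n := by exact_mod_cast hn
    have hp : 0 ≤ p n := le_trans (by positivity) h0
    have h2 := hb (p n) hp h1
    have h3 := gnpProb_add_gnpProb_not (p n) (MediumCycleProp ε δ n (p n))
    have h4 : C * (n : ℝ) ^ (3/2 : ℝ) ≤ p n * (n : ℝ) ^ 2 := by
      have h5 : (n : ℝ) ^ (3/2 : ℝ) = (n : ℝ) ^ (-(1/2) : ℝ) * (n : ℝ) ^ 2 := by
        rw [← Real.rpow_natCast, ← Real.rpow_add hn0]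
        norm_num
      rw [h5, ← mul_assoc]
      gcongr
    have h6 : Real.exp (n * Real.log n + K * n - c * (p n * (n : ℝ) ^ 2)) ≤
        Real.exp (n * Real.log n + K * n - c * C * (n : ℝ) ^ (3/2 : ℝ)) := by
      rw [Real.exp_le_exp, mul_assoc c C]
      gcongr
    linarith
  · filter_upwards [hp0, hp1] with n h0 h1
    have hp : 0 ≤ p n := le_trans (by positivity) h0
    have h3 := gnpProb_add_gnpProb_not (p n) (MediumCycleProp ε δ n (p n))
    have h4 := gnpProb_nonneg hp h1 (fun G => ¬ MediumCycleProp ε δ n (p n) G)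
    linarith

/-- For all ε > 0 and δ > 0 there exists a constant C such that if p = p(n) ≥ C·n^(-1/2),
then G(n,p) a.a.s. satisfies: every Hamiltonian subgraph G' with more than (1/2 + ε)·n²p/2
edges contains a cycle of length t for all integers t ∈ [δn, (1−δ)n]. -/
theorem medium_cycles (ε δ : ℝ) (hε : 0 < ε) (hδ : 0 < δ) :
    ∃ C : ℝ, 0 < C ∧ ∀ p : ℕ → ℝ,
      (∀ n : ℕ, C * (n : ℝ) ^ (-(1/2) : ℝ) ≤ p n) → (∀ n : ℕ, p n ≤ 1) →
      Filter.Tendsto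
        (fun n : ℕ => gnpProb (Fin n) (p n) (fun G =>
          ∀ G' : SimpleGraph (Fin n), G' ≤ G → G'.IsHamiltonian →
            (1/2 + ε) * ((n : ℝ)^2 * p n / 2) < (G'.edgeSet.ncard : ℝ) →
            ∀ t : ℕ, δ * n ≤ (t : ℝ) → (t : ℝ) ≤ (1 - δ) * n →
              HasCycleLength G' t))
        Filter.atTop (nhds 1) :=
  ⟨1, one_pos, fun _ hp0 hp1 => tendsto_gnpProb_mediumCycleProp hε hδ one_pos
    (Eventually.of_forall hp0) (Eventually.of_forall hp1)⟩
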